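/- (Multiparameter Birkhoff theorem, continuous case.) Let (S, 𝓑, μ) be a probability space and let {φ_t}_{t∈ℝ^d} be a measure-preserving ℝ^d-action on (S,μ) with (s,t) ↦ φ_t(s) jointly measurable. Let f₀ ∈ L¹(S,μ) and let 𝓘 denote the σ-algebra of all measurable sets A with φ_t^{-1}(A) = A for all t ∈ ℝ^d. Then the averages A_T f := (2T)^{-d} ∫_{(−T,T]^d} f₀(φ_t(·)) dt converge to the conditional expectation E_μ[f₀ | 𝓘] both μ-almost everywhere and in L¹(S,μ), as T → ∞. -/

import Mathlib

open MeasureTheory Filter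

open Metric Set Module
open scoped ENNReal NNReal Topology

/-!
Up to a null set, the cube `(-T, T]^d` is the ball of radius `T` for the sup norm, so it suffices to
average over balls. On a single orbit, a Vitali covering bounds the size of the set where some ball
average of `f ≥ 0` exceeds a given level; integrating this bound over the phase space, on which the
translations preserve the measure, gives a weak-type `(1, 1)` inequality for the maximal function.
Hence the functions whose averages converge almost everywhere to their conditional expectation are
closed in `L¹`. They contain the invariant functions, and they contain the bounded coboundaries
`g (u +ᵥ ·) - g`, because a large ball and its translate by `u` differ by a negligible proportion.
A function in `L²` orthogonal to all of these is itself invariant, hence zero, so every function in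
`L²`, and by density every function in `L¹`, has the property. Convergence in `L¹` holds for bounded
functions by dominated convergence, and in general by density, as averaging is an `L¹`-contraction.
-/

section MeasurableAction

variable {G S : Type*} [MeasurableSpace G] [MeasurableSpace S] [VAdd G S] [MeasurableVAdd₂ G S]
  (ρ : Measure G) [SFinite ρ]

theorem measurable_lintegral_vadd {f : S → ℝ≥0∞} (hf : Measurable f) :
    Measurable fun s ↦ ∫⁻ t, f (t +ᵥ s) ∂ρ :=
  (hf.comp (measurable_vadd (M := G))).lintegral_prod_left'

variable {μ : Measure S} [SFinite μ] [VAddInvariantMeasure G S μ]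

variable (μ) in
theorem measurePreserving_prodMk_vadd :
    MeasurePreserving (fun p : G × S ↦ (p.1, p.1 +ᵥ p.2)) (ρ.prod μ) (ρ.prod μ) :=
  (MeasurePreserving.id ρ).skew_product measurable_vadd
    (ae_of_all _ fun t ↦ (measurePreserving_vadd t μ).map_eq)

variable (μ) in
theorem quasiMeasurePreserving_vadd :
    Measure.QuasiMeasurePreserving (fun p : G × S ↦ p.1 +ᵥ p.2) (ρ.prod μ) μ :=
  Measure.quasiMeasurePreserving_snd.comp
    (measurePreserving_prodMk_vadd ρ μ).quasiMeasurePreserving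

theorem ae_ae_vadd {p : S → Prop} (hp : ∀ᵐ s ∂μ, p s) : ∀ᵐ s ∂μ, ∀ᵐ t ∂ρ, p (t +ᵥ s) :=
  Measure.ae_ae_of_ae_prod <| Measure.measurePreserving_swap.quasiMeasurePreserving.ae <|
    (quasiMeasurePreserving_vadd ρ μ).ae hp

theorem lintegral_lintegral_vadd {f : S → ℝ≥0∞} (hf : AEMeasurable f μ) :
    ∫⁻ s, ∫⁻ t, f (t +ᵥ s) ∂ρ ∂μ = ρ univ * ∫⁻ s, f s ∂μ := by
  have hf_prod : AEMeasurable (fun p : G × S ↦ f (p.1 +ᵥ p.2)) (ρ.prod μ) :=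
    hf.comp_quasiMeasurePreserving (quasiMeasurePreserving_vadd ρ μ)
  calc ∫⁻ s, ∫⁻ t, f (t +ᵥ s) ∂ρ ∂μ
      = ∫⁻ p : G × S, f (p.1 +ᵥ p.2) ∂ρ.prod μ := (lintegral_prod_symm _ hf_prod).symm
    _ = ∫⁻ p : G × S, f p.2 ∂ρ.prod μ := by
        have hf_snd : AEMeasurable (fun p : G × S ↦ f p.2) (ρ.prod μ) := hf.comp_snd
        rw [← (measurePreserving_prodMk_vadd ρ μ).map_eq] at hf_snd
        rw [← lintegral_map' hf_snd (measurePreserving_prodMk_vadd ρ μ).aemeasurable,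
          (measurePreserving_prodMk_vadd ρ μ).map_eq]
    _ = ρ univ * ∫⁻ s, f s ∂μ := by
        rw [lintegral_prod _ hf.comp_snd]
        simp only [lintegral_const, mul_comm]

theorem integrable_vadd_prod {F : Type*} [NormedAddCommGroup F] [IsFiniteMeasure ρ] {f : S → F}
    (hf : Integrable f μ) : Integrable (fun p : G × S ↦ f (p.1 +ᵥ p.2)) (ρ.prod μ) :=
  (measurePreserving_prodMk_vadd ρ μ).integrable_comp_of_integrable (hf.comp_snd ρ)

theorem ae_integrableOn_closedBall_vadd {E S F : Type*} [NormedAddCommGroup E] [ProperSpace E]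
    [MeasurableSpace E] [MeasurableSpace S] [VAdd E S] [MeasurableVAdd₂ E S] (ν : Measure E)
    [SFinite ν] [IsFiniteMeasureOnCompacts ν] {μ : Measure S} [SFinite μ]
    [VAddInvariantMeasure E S μ] [NormedAddCommGroup F] {f : S → F} (hf : Integrable f μ) :
    ∀ᵐ s ∂μ, ∀ T, IntegrableOn (fun t : E ↦ f (t +ᵥ s)) (closedBall 0 T) ν := by
  have hnat (n : ℕ) : ∀ᵐ s ∂μ, IntegrableOn (fun t : E ↦ f (t +ᵥ s)) (closedBall 0 n) ν :=
    haveI : IsFiniteMeasure (ν.restrict (closedBall (0 : E) n)) :=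
      isFiniteMeasure_restrict.2 measure_closedBall_lt_top.ne
    (integrable_vadd_prod (ν.restrict (closedBall (0 : E) n)) hf).prod_left_ae
  filter_upwards [ae_all_iff.2 hnat] with s hs T
  obtain ⟨n, hn⟩ := exists_nat_ge T
  exact (hs n).mono_set (closedBall_subset_closedBall hn)

end MeasurableAction

section Invariants

variable (G S : Type*) [MeasurableSpace S] [VAdd G S]

/-- The σ-algebra of measurable subsets of `S` that are invariant under the action of `G`. -/
abbrev vaddInvariants : MeasurableSpace S :=
  ⨅ t : G, MeasurableSpace.invariants (t +ᵥ · : S → S)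

variable {G S}

theorem measurableSet_vaddInvariants [Nonempty G] {A : Set S} :
    MeasurableSet[vaddInvariants G S] A ↔ MeasurableSet A ∧ ∀ t : G, (t +ᵥ ·) ⁻¹' A = A := by
  simp only [MeasurableSpace.measurableSet_iInf, MeasurableSpace.measurableSet_invariants,
    forall_and, forall_const]

theorem vaddInvariants_le [Nonempty G] : vaddInvariants G S ≤ ‹MeasurableSpace S› :=
  fun _ hA ↦ (measurableSet_vaddInvariants.1 hA).1

theorem generateFrom_eq_vaddInvariants [Nonempty G] :
    MeasurableSpace.generateFrom {A : Set S | MeasurableSet A ∧ ∀ t : G, (t +ᵥ ·) ⁻¹' A = A} =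
      vaddInvariants G S :=
  le_antisymm (MeasurableSpace.generateFrom_le fun _ hA ↦ measurableSet_vaddInvariants.2 hA)
    fun _ hA ↦ MeasurableSpace.measurableSet_generateFrom (measurableSet_vaddInvariants.1 hA)

theorem vadd_eq_of_stronglyMeasurable_vaddInvariants [Nonempty G] {F : Type*} [TopologicalSpace F]
    [TopologicalSpace.MetrizableSpace F] {f : S → F} (hf : StronglyMeasurable[vaddInvariants G S] f)
    (t : G) (s : S) : f (t +ᵥ s) = f s := by
  have hfiber : MeasurableSet[vaddInvariants G S] {x | f x = f s} :=
    hf.measurableSet_eq_fun stronglyMeasurable_const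
  have hs : s ∈ (t +ᵥ ·) ⁻¹' {x | f x = f s} := by
    rw [(measurableSet_vaddInvariants.1 hfiber).2 t]
    rfl
  exact hs

theorem stronglyMeasurable_vaddInvariants [Nonempty G] {F : Type*} [TopologicalSpace F]
    [TopologicalSpace.PseudoMetrizableSpace F]
    {f : S → F} (hf : StronglyMeasurable f) (hinv : ∀ (t : G) s, f (t +ᵥ s) = f s) :
    StronglyMeasurable[vaddInvariants G S] f := by
  borelize F
  refine stronglyMeasurable_iff_measurable_separable.2
    ⟨fun B hB ↦ measurableSet_vaddInvariants.2 ⟨hf.measurable hB, fun t ↦ ?_⟩,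
      hf.isSeparable_range⟩
  ext s
  simp only [mem_preimage, hinv]

theorem condExp_vaddInvariants_comp_vadd {G S F : Type*} [MeasurableSpace S] [AddGroup G]
    [AddAction G S] [MeasurableConstVAdd G S] {μ : Measure S} [IsFiniteMeasure μ]
    [VAddInvariantMeasure G S μ] [NormedAddCommGroup F] [NormedSpace ℝ F] [CompleteSpace F]
    {f : S → F} (hf : Integrable f μ) (u : G) :
    μ[fun s ↦ f (u +ᵥ s) | vaddInvariants G S] =ᵐ[μ] μ[f | vaddInvariants G S] := by
  have hu : MeasurePreserving (u +ᵥ · : S → S) μ μ := measurePreserving_vadd u μ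
  refine (ae_eq_condExp_of_forall_setIntegral_eq vaddInvariants_le
    (hu.integrable_comp_of_integrable hf) (fun _ _ _ ↦ integrable_condExp.integrableOn)
    (fun A hA _ ↦ ?_) stronglyMeasurable_condExp.aestronglyMeasurable).symm
  calc ∫ s in A, (μ[f | vaddInvariants G S]) s ∂μ
      = ∫ s in A, f s ∂μ := setIntegral_condExp vaddInvariants_le hf hA
    _ = ∫ s in (u +ᵥ ·) ⁻¹' A, f (u +ᵥ s) ∂μ :=
        (hu.setIntegral_preimage_emb (measurableEmbedding_const_vadd u) _ _).symm
    _ = ∫ s in A, f (u +ᵥ s) ∂μ := by rw [(measurableSet_vaddInvariants.1 hA).2]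

end Invariants

section HaarBalls

theorem measureReal_closedBall_pos {X : Type*} [PseudoMetricSpace X] [ProperSpace X]
    [MeasurableSpace X] (ν : Measure X) [ν.IsOpenPosMeasure] [IsFiniteMeasureOnCompacts ν] (x : X)
    {r : ℝ} (hr : 0 < r) : 0 < ν.real (closedBall x r) :=
  ENNReal.toReal_pos (measure_closedBall_pos ν x hr).ne' measure_closedBall_lt_top.ne

theorem inv_pow_mul_setIntegral_pi_Ioc_eq_setAverage {ι : Type*} [Fintype ι] {T : ℝ} (hT : 0 ≤ T)
    (f : (ι → ℝ) → ℝ) :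
    ((2 * T) ^ Fintype.card ι)⁻¹ * ∫ t in univ.pi fun _ : ι ↦ Ioc (-T) T, f t =
      ⨍ t in closedBall 0 T, f t := by
  have hcube : (univ.pi fun _ : ι ↦ Ioc (-T) T) =ᵐ[volume] closedBall (0 : ι → ℝ) T := by
    have hball : closedBall (0 : ι → ℝ) T = Icc (fun _ ↦ -T) (fun _ ↦ T) := by
      simp only [closedBall_pi _ hT, Real.closedBall_eq_Icc, Pi.zero_apply, zero_sub, zero_add,
        pi_univ_Icc]
    rw [hball]
    exact Measure.univ_pi_Ioc_ae_eq_Icc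
  rw [setAverage_eq, setIntegral_congr_set hcube, measureReal_def, Real.volume_pi_closedBall _ hT,
    ENNReal.toReal_ofReal (by positivity), smul_eq_mul]

variable {E : Type*} [NormedAddCommGroup E] [MeasurableSpace E] [BorelSpace E]
  (ν : Measure E) [ν.IsAddHaarMeasure]

theorem setLIntegral_closedBall_eq_add_right (f : E → ℝ≥0∞) (u : E) (r : ℝ) :
    ∫⁻ t in closedBall u r, f t ∂ν = ∫⁻ t in closedBall 0 r, f (t + u) ∂ν := by
  rw [← (measurePreserving_add_right ν u).setLIntegral_comp_preimage_emb
    (measurableEmbedding_addRight u), preimage_add_right_closedBall, sub_self]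

theorem setAverage_closedBall_eq_add_right {F : Type*} [NormedAddCommGroup F] [NormedSpace ℝ F]
    (f : E → F) (u : E) (r : ℝ) :
    ⨍ t in closedBall u r, f t ∂ν = ⨍ t in closedBall 0 r, f (t + u) ∂ν := by
  rw [setAverage_eq, setAverage_eq, ν.addHaar_real_closedBall_center,
    ← (measurePreserving_add_right ν u).setIntegral_preimage_emb
      (measurableEmbedding_addRight u), preimage_add_right_closedBall, sub_self]

variable [NormedSpace ℝ E] [FiniteDimensional ℝ E]

theorem addHaar_closedBall_nnreal_mul (x : E) (c : ℝ≥0) {r : ℝ} (hr : 0 ≤ r) :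
    ν (closedBall x (c * r)) = c ^ finrank ℝ E * ν (closedBall x r) := by
  rw [ν.addHaar_closedBall_mul x c.coe_nonneg hr, ν.addHaar_closedBall_center x,
    ENNReal.ofReal_pow c.coe_nonneg, ENNReal.ofReal_coe_nnreal]

theorem continuousAt_addHaar_closedBall {T : ℝ} (hT : 0 < T) :
    ContinuousAt (fun r ↦ ν (closedBall (0 : E) r)) T := by
  have hball : (fun r ↦ ν (closedBall (0 : E) r)) =ᶠ[𝓝 T]
      fun r ↦ ENNReal.ofReal (r ^ finrank ℝ E) * ν (closedBall 0 1) := by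
    filter_upwards [lt_mem_nhds hT] with r hr using ν.addHaar_closedBall' 0 hr.le
  refine ContinuousAt.congr ?_ hball.symm
  exact ENNReal.Tendsto.mul_const (ENNReal.tendsto_ofReal ((continuous_pow _).tendsto T))
    (.inr measure_closedBall_lt_top.ne)

theorem tendsto_addHaar_real_closedBall_add_div (a : ℝ) :
    Tendsto (fun T ↦ ν.real (closedBall (0 : E) (T + a)) / ν.real (closedBall (0 : E) T))
      atTop (𝓝 1) := by
  have hlim : Tendsto (fun T : ℝ ↦ (1 + a / T) ^ finrank ℝ E) atTop (𝓝 1) := by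
    simpa using ((tendsto_const_nhds (x := (1 : ℝ))).add
      (tendsto_const_nhds.div_atTop tendsto_id)).pow (finrank ℝ E)
  refine hlim.congr' ?_
  filter_upwards [eventually_gt_atTop 0, eventually_ge_atTop (-a)] with T hT hTa
  rw [ν.addHaar_real_closedBall' 0 hT.le, ν.addHaar_real_closedBall' 0 (by linarith),
    mul_div_mul_right _ _ (measureReal_closedBall_pos ν 0 one_pos).ne', ← div_pow, add_div,
    div_self hT.ne']

theorem mul_measure_le_of_forall_mul_closedBall_le {D : Set E} {r : E → ℝ} {N R : ℝ}
    (hr_pos : ∀ u ∈ D, 0 < r u) (hr_le : ∀ u ∈ D, r u ≤ N) (hD : D ⊆ closedBall 0 R)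
    {f : E → ℝ≥0∞} {c : ℝ≥0∞}
    (hf : ∀ u ∈ D, c * ν (closedBall u (r u)) ≤ ∫⁻ t in closedBall u (r u), f t ∂ν) :
    c * ν D ≤ 5 ^ finrank ℝ E * ∫⁻ t in closedBall 0 (R + N), f t ∂ν := by
  obtain ⟨w, hwD, hdisj, hcover⟩ :=
    Vitali.exists_disjoint_subfamily_covering_enlargement_closedBall D (fun u ↦ u) r N hr_le 5
      (by norm_num)
  have hw : w.Countable := hdisj.countable_of_nonempty_interior fun u hu ↦
    ⟨u, ball_subset_interior_closedBall (mem_ball_self (hr_pos u (hwD hu)))⟩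
  have hD_subset : D ⊆ ⋃ u ∈ w, closedBall u (5 * r u) := fun u hu ↦ by
    obtain ⟨v, hv, huv⟩ := hcover u hu
    exact mem_biUnion hv (huv (mem_closedBall_self (hr_pos u hu).le))
  have hw_subset : ⋃ u ∈ w, closedBall u (r u) ⊆ closedBall 0 (R + N) :=
    iUnion₂_subset fun u hu ↦ closedBall_subset_closedBall' <| by
      linarith [mem_closedBall.1 (hD (hwD hu)), hr_le u (hwD hu)]
  calc c * ν D
      ≤ c * ∑' u : w, ν (closedBall (u : E) (5 * r u)) := by
        gcongr
        exact (measure_mono hD_subset).trans (measure_biUnion_le ν hw _)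
    _ = 5 ^ finrank ℝ E * ∑' u : w, c * ν (closedBall (u : E) (r u)) := by
        rw [← ENNReal.tsum_mul_left, ← ENNReal.tsum_mul_left]
        congr with u
        have := addHaar_closedBall_nnreal_mul ν (u : E) 5 (hr_pos u (hwD u.2)).le
        rw [NNReal.coe_ofNat, ENNReal.coe_ofNat] at this
        rw [this, mul_left_comm]
    _ ≤ 5 ^ finrank ℝ E * ∑' u : w, ∫⁻ t in closedBall (u : E) (r u), f t ∂ν := by
        gcongr with u
        exact hf u (hwD u.2)
    _ = 5 ^ finrank ℝ E * ∫⁻ t in ⋃ u ∈ w, closedBall u (r u), f t ∂ν := by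
        rw [lintegral_biUnion hw (fun _ _ ↦ measurableSet_closedBall) hdisj]
    _ ≤ 5 ^ finrank ℝ E * ∫⁻ t in closedBall 0 (R + N), f t ∂ν := by
        gcongr

theorem eventually_nhdsGT_lt_setLAverage_closedBall {f : E → ℝ≥0∞} {T : ℝ} (hT : 0 < T) {c : ℝ≥0∞}
    (hc : c < ⨍⁻ t in closedBall 0 T, f t ∂ν) :
    ∀ᶠ r in 𝓝[>] T, c < ⨍⁻ t in closedBall 0 r, f t ∂ν := by
  rw [setLAverage_eq] at hc
  have hlim : Tendsto (fun r ↦ (∫⁻ t in closedBall 0 T, f t ∂ν) / ν (closedBall (0 : E) r))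
      (𝓝[>] T) (𝓝 ((∫⁻ t in closedBall 0 T, f t ∂ν) / ν (closedBall (0 : E) T))) :=
    (ENNReal.Tendsto.const_div (continuousAt_addHaar_closedBall ν hT)
      (.inl measure_closedBall_lt_top.ne)).mono_left nhdsWithin_le_nhds
  filter_upwards [hlim.eventually_const_lt hc, self_mem_nhdsWithin] with r hr hTr
  rw [setLAverage_eq]
  exact hr.trans_le (by gcongr; exact le_of_lt hTr)

end HaarBalls

section BallMaximal

variable {E S : Type*} [NormedAddCommGroup E] [MeasurableSpace E] [AddAction E S]

/-- The maximal function of `f` along the orbits of the action, where the supremum of the averages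
of `f` is taken over the balls `closedBall 0 T` with radius `T` in the set `I`. -/
noncomputable def ballMaximal (ν : Measure E) (I : Set ℝ) (f : S → ℝ≥0∞) (s : S) : ℝ≥0∞ :=
  ⨆ T ∈ I, ⨍⁻ t in closedBall (0 : E) T, f (t +ᵥ s) ∂ν

theorem ballMaximal_congr_ae [MeasurableSpace S] [MeasurableVAdd₂ E S] {ν : Measure E} [SFinite ν]
    {μ : Measure S} [SFinite μ] [VAddInvariantMeasure E S μ] (I : Set ℝ) {f g : S → ℝ≥0∞}
    (hfg : f =ᵐ[μ] g) : ballMaximal ν I f =ᵐ[μ] ballMaximal ν I g := by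
  filter_upwards [ae_ae_vadd ν hfg] with s hs
  exact iSup_congr fun T ↦ iSup_congr fun _ ↦ laverage_congr (ae_restrict_of_ae hs)

variable [NormedSpace ℝ E] [FiniteDimensional ℝ E] [BorelSpace E] {ν : Measure E}
  [ν.IsAddHaarMeasure]

theorem mul_measure_lt_ballMaximal_orbit_le {R : ℝ} (f : S → ℝ≥0∞) (c : ℝ≥0∞) (s : S) :
    c * ν {u ∈ closedBall (0 : E) R | c < ballMaximal ν (Ioo 0 R) f (u +ᵥ s)} ≤
      5 ^ finrank ℝ E * ∫⁻ t in closedBall (0 : E) (R + R), f (t +ᵥ s) ∂ν := by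
  have hradius : ∀ u ∈ {u ∈ closedBall (0 : E) R | c < ballMaximal ν (Ioo 0 R) f (u +ᵥ s)},
      ∃ r ∈ Ioo 0 R, c < ⨍⁻ t in closedBall (0 : E) r, f (t +ᵥ u +ᵥ s) ∂ν := fun u hu ↦ by
    simpa only [ballMaximal, lt_iSup_iff, exists_prop] using hu.2
  choose! r hr hlt using hradius
  refine mul_measure_le_of_forall_mul_closedBall_le ν (fun u hu ↦ (hr u hu).1)
    (fun u hu ↦ (hr u hu).2.le) (fun u hu ↦ hu.1) fun u hu ↦ ?_
  rw [setLIntegral_closedBall_eq_add_right, ν.addHaar_closedBall_center]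
  simp only [add_vadd]
  have hlt_div := hlt u hu
  rw [setLAverage_eq] at hlt_div
  exact (ENNReal.mul_lt_of_lt_div hlt_div).le

variable [MeasurableSpace S] [MeasurableVAdd₂ E S]

theorem measurable_ballMaximal {I : Set ℝ} (hI : IsOpen I) (hI_pos : I ⊆ Ioi 0)
    {f : S → ℝ≥0∞} (hf : Measurable f) : Measurable (ballMaximal ν I f) := by
  refine measurable_of_Ioi fun c ↦ ?_
  have hpreimage : ballMaximal ν I f ⁻¹' Ioi c =
      ⋃ q ∈ {q : ℚ | (q : ℝ) ∈ I}, {s | c < ⨍⁻ t in closedBall (0 : E) q, f (t +ᵥ s) ∂ν} := by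
    ext s
    simp only [ballMaximal, mem_preimage, mem_Ioi, lt_iSup_iff, mem_iUnion, mem_ofPred_eq,
      exists_prop]
    refine ⟨fun ⟨T, hT, hc⟩ ↦ ?_, fun ⟨q, hq, hc⟩ ↦ ⟨q, hq, hc⟩⟩
    have hnear := (eventually_nhdsGT_lt_setLAverage_closedBall ν (hI_pos hT) hc).and
      (mem_nhdsWithin_of_mem_nhds (hI.mem_nhds hT))
    obtain ⟨R, hR, hIoo⟩ := mem_nhdsGT_iff_exists_Ioo_subset.1 hnear
    obtain ⟨q, hTq, hqR⟩ := exists_rat_btwn (mem_Ioi.1 hR)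
    exact ⟨q, (hIoo ⟨hTq, hqR⟩).2, (hIoo ⟨hTq, hqR⟩).1⟩
  rw [hpreimage]
  refine MeasurableSet.biUnion (to_countable _) fun q _ ↦ measurableSet_lt measurable_const ?_
  simp only [setLAverage_eq]
  exact (measurable_lintegral_vadd _ hf).div_const _

variable {μ : Measure S} [SFinite μ] [VAddInvariantMeasure E S μ]

theorem mul_measure_lt_ballMaximal_Ioo_le {f : S → ℝ≥0∞} (hf : Measurable f) (c : ℝ≥0∞) {R : ℝ}
    (hR : 0 < R) :
    c * μ {s | c < ballMaximal ν (Ioo 0 R) f s} ≤ 10 ^ finrank ℝ E * ∫⁻ s, f s ∂μ := by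
  set X := {s | c < ballMaximal ν (Ioo 0 R) f s}
  have hX : MeasurableSet X := measurableSet_lt measurable_const
    (measurable_ballMaximal isOpen_Ioo Ioo_subset_Ioi_self hf)
  have horbit (s : S) : c * ∫⁻ u in closedBall (0 : E) R, X.indicator 1 (u +ᵥ s) ∂ν ≤
      5 ^ finrank ℝ E * ∫⁻ t in closedBall (0 : E) (R + R), f (t +ᵥ s) ∂ν := by
    have hXs : MeasurableSet {u : E | u +ᵥ s ∈ X} := (measurable_vadd_const s) hX
    have hindicator : ∫⁻ u in closedBall (0 : E) R, X.indicator 1 (u +ᵥ s) ∂ν =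
        ν {u ∈ closedBall (0 : E) R | u +ᵥ s ∈ X} := by
      rw [ofPred_and, ofPred_mem_eq, inter_comm, ← Measure.restrict_apply hXs,
        ← lintegral_indicator_one hXs]
      rfl
    rw [hindicator]
    exact mul_measure_lt_ballMaximal_orbit_le f c s
  have hvol : ν (closedBall (0 : E) (R + R)) = 2 ^ finrank ℝ E * ν (closedBall (0 : E) R) := by
    simpa [two_mul] using addHaar_closedBall_nnreal_mul ν (0 : E) 2 hR.le
  rw [← ENNReal.mul_le_mul_iff_right (measure_closedBall_pos ν (0 : E) hR).ne'
    measure_closedBall_lt_top.ne]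
  calc ν (closedBall (0 : E) R) * (c * μ X)
      = ∫⁻ s, c * ∫⁻ u in closedBall (0 : E) R, X.indicator 1 (u +ᵥ s) ∂ν ∂μ := by
        rw [lintegral_const_mul _ (measurable_lintegral_vadd _ (measurable_one.indicator hX)),
          lintegral_lintegral_vadd _ (measurable_one.indicator hX).aemeasurable,
          lintegral_indicator_one hX, Measure.restrict_apply_univ, mul_left_comm]
    _ ≤ ∫⁻ s, 5 ^ finrank ℝ E * ∫⁻ t in closedBall (0 : E) (R + R), f (t +ᵥ s) ∂ν ∂μ :=
        lintegral_mono horbit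
    _ = ν (closedBall (0 : E) R) * (10 ^ finrank ℝ E * ∫⁻ s, f s ∂μ) := by
        rw [lintegral_const_mul _ (measurable_lintegral_vadd _ hf),
          lintegral_lintegral_vadd _ hf.aemeasurable, Measure.restrict_apply_univ, hvol,
          show (10 : ℝ≥0∞) = 5 * 2 by norm_num, mul_pow]
        ring

theorem mul_measure_lt_ballMaximal_le {f : S → ℝ≥0∞} (hf : AEMeasurable f μ) (c : ℝ≥0∞) :
    c * μ {s | c < ballMaximal ν (Ioi 0) f s} ≤ 10 ^ finrank ℝ E * ∫⁻ s, f s ∂μ := by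
  wlog hf_meas : Measurable f generalizing f
  · have hμ : μ {s | c < ballMaximal ν (Ioi 0) f s} =
        μ {s | c < ballMaximal ν (Ioi 0) (hf.mk f) s} :=
      measure_congr <| by
        filter_upwards [ballMaximal_congr_ae (ν := ν) (Ioi 0) hf.ae_eq_mk] with s hs
        exact congrArg (c < ·) hs
    rw [hμ, lintegral_congr_ae hf.ae_eq_mk]
    exact this hf.measurable_mk.aemeasurable hf.measurable_mk
  have hunion : {s | c < ballMaximal ν (Ioi 0) f s} =
      ⋃ n : ℕ, {s | c < ballMaximal ν (Ioo 0 (n + 1)) f s} := by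
    ext s
    simp only [ballMaximal, mem_ofPred_eq, mem_iUnion, lt_iSup_iff, exists_prop]
    refine ⟨fun ⟨T, hT, hc⟩ ↦ ?_, fun ⟨_, T, hT, hc⟩ ↦ ⟨T, hT.1, hc⟩⟩
    obtain ⟨n, hn⟩ := exists_nat_gt T
    exact ⟨n, T, ⟨hT, by linarith⟩, hc⟩
  have hmono : Monotone fun n : ℕ ↦ {s | c < ballMaximal ν (Ioo 0 ((n : ℝ) + 1)) f s} :=
    fun m n hmn s (hs : c < _) ↦ hs.trans_le <| biSup_mono fun T hT ↦
      Ioo_subset_Ioo_right (by gcongr) hT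
  rw [hunion, hmono.measure_iUnion, ENNReal.mul_iSup]
  exact iSup_le fun n ↦ mul_measure_lt_ballMaximal_Ioo_le hf_meas c (by positivity)

end BallMaximal

section Folner

variable {E F : Type*} [NormedAddCommGroup E] [NormedSpace ℝ E] [FiniteDimensional ℝ E]
  [MeasurableSpace E] [BorelSpace E] (ν : Measure E) [ν.IsAddHaarMeasure]
  [NormedAddCommGroup F] [NormedSpace ℝ F]

theorem norm_setIntegral_sub_setIntegral_le {α : Type*} [MeasurableSpace α] {ρ : Measure α}
    {f : α → F} {A B : Set α} {C : ℝ} (hA : MeasurableSet A) (hB : ρ B ≠ ∞) (hAB : A ⊆ B)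
    (hf : AEStronglyMeasurable f ρ) (hC : ∀ x, ‖f x‖ ≤ C) :
    ‖∫ x in B, f x ∂ρ - ∫ x in A, f x ∂ρ‖ ≤ C * (ρ.real B - ρ.real A) := by
  have hfB : IntegrableOn f B ρ := .of_bound hB.lt_top hf.restrict C (ae_of_all _ hC)
  rw [← setIntegral_sdiff hA hfB hAB, ← measureReal_sdiff hAB hA hB]
  exact norm_setIntegral_le_of_norm_le_const (measure_lt_top_of_subset sdiff_subset hB)
    fun x _ ↦ hC x

theorem norm_setAverage_closedBall_sub_setAverage_closedBall_le {f : E → F} {C T : ℝ} (hT : 0 < T)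
    (hf : AEStronglyMeasurable f ν) (hC : ∀ t, ‖f t‖ ≤ C) (u : E) :
    ‖⨍ t in closedBall u T, f t ∂ν - ⨍ t in closedBall 0 T, f t ∂ν‖ ≤
      2 * C * (ν.real (closedBall (0 : E) (T + ‖u‖)) / ν.real (closedBall (0 : E) T) - 1) := by
  set B := closedBall (0 : E) (T + ‖u‖)
  have hle (v : E) (hv : ‖v‖ ≤ ‖u‖) : ‖∫ t in B, f t ∂ν - ∫ t in closedBall v T, f t ∂ν‖ ≤
      C * (ν.real B - ν.real (closedBall (0 : E) T)) := by
    have hsubset : closedBall v T ⊆ B := closedBall_subset_closedBall' (by simpa using hv)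
    rw [← ν.addHaar_real_closedBall_center v T]
    exact norm_setIntegral_sub_setIntegral_le measurableSet_closedBall
      measure_closedBall_lt_top.ne hsubset hf hC
  have hpos : 0 < ν.real (closedBall (0 : E) T) := measureReal_closedBall_pos ν 0 hT
  rw [setAverage_eq, setAverage_eq, ν.addHaar_real_closedBall_center u, ← smul_sub, norm_smul,
    Real.norm_of_nonneg (inv_nonneg.2 hpos.le), inv_mul_le_iff₀ hpos]
  calc ‖∫ t in closedBall u T, f t ∂ν - ∫ t in closedBall 0 T, f t ∂ν‖
      ≤ ‖∫ t in B, f t ∂ν - ∫ t in closedBall 0 T, f t ∂ν‖ +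
          ‖∫ t in B, f t ∂ν - ∫ t in closedBall u T, f t ∂ν‖ := by
        rw [← sub_sub_sub_cancel_left _ _ (∫ t in B, f t ∂ν)]
        exact norm_sub_le _ _
    _ ≤ C * (ν.real B - ν.real (closedBall (0 : E) T)) +
          C * (ν.real B - ν.real (closedBall (0 : E) T)) :=
        add_le_add (hle 0 (by simp)) (hle u le_rfl)
    _ = ν.real (closedBall (0 : E) T) *
          (2 * C * (ν.real B / ν.real (closedBall (0 : E) T) - 1)) := by
        field_simp
        ring

theorem tendsto_setAverage_closedBall_sub_setAverage_closedBall {f : E → F} {C : ℝ}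
    (hf : AEStronglyMeasurable f ν) (hC : ∀ t, ‖f t‖ ≤ C) (u : E) :
    Tendsto (fun T ↦ ⨍ t in closedBall u T, f t ∂ν - ⨍ t in closedBall 0 T, f t ∂ν)
      atTop (𝓝 0) := by
  refine squeeze_zero_norm' ?_ (by
    simpa using ((tendsto_addHaar_real_closedBall_add_div ν ‖u‖).sub_const 1).const_mul (2 * C))
  filter_upwards [eventually_gt_atTop 0] with T hT
  exact norm_setAverage_closedBall_sub_setAverage_closedBall_le ν hT hf hC u

end Folner

section BallAverage

variable {E S F : Type*} [NormedAddCommGroup E] [MeasurableSpace E] [AddAction E S]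
  [NormedAddCommGroup F] [NormedSpace ℝ F]

/-- The average of `f` over the part `closedBall 0 T +ᵥ s` of the orbit of `s`, with respect to a
measure `ν` on the acting group. -/
noncomputable def ballAverage (ν : Measure E) (f : S → F) (T : ℝ) (s : S) : F :=
  ⨍ t in closedBall (0 : E) T, f (t +ᵥ s) ∂ν

theorem enorm_ballAverage_le_ballMaximal (ν : Measure E) (f : S → F) {T : ℝ} (hT : 0 < T) (s : S) :
    ‖ballAverage ν f T s‖ₑ ≤ ballMaximal ν (Ioi 0) (‖f ·‖ₑ) s :=
  (enorm_integral_le_lintegral_enorm _).trans <|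
    le_iSup₂ (f := fun T (_ : T ∈ Ioi (0 : ℝ)) ↦ ⨍⁻ t in closedBall (0 : E) T, ‖f (t +ᵥ s)‖ₑ ∂ν)
      T hT

theorem ballAverage_vadd [BorelSpace E] (ν : Measure E) [ν.IsAddHaarMeasure] (f : S → F) (T : ℝ)
    (u : E) (s : S) :
    ballAverage ν f T (u +ᵥ s) = ⨍ t in closedBall u T, f (t +ᵥ s) ∂ν := by
  rw [setAverage_closedBall_eq_add_right]
  simp only [ballAverage, add_vadd]

section OpenPos

variable [ProperSpace E] (ν : Measure E) [ν.IsOpenPosMeasure] [IsFiniteMeasureOnCompacts ν]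

theorem norm_ballAverage_le {f : S → F} {C T : ℝ} (hT : 0 < T) (hC : ∀ s, ‖f s‖ ≤ C) (s : S) :
    ‖ballAverage ν f T s‖ ≤ C := by
  have hpos : 0 < ν.real (closedBall (0 : E) T) := measureReal_closedBall_pos ν 0 hT
  rw [ballAverage, setAverage_eq, norm_smul, Real.norm_of_nonneg (inv_nonneg.2 hpos.le),
    inv_mul_le_iff₀ hpos, mul_comm]
  exact norm_setIntegral_le_of_norm_le_const measure_closedBall_lt_top fun t _ ↦ hC _

theorem ballAverage_eq_of_ae_eq [CompleteSpace F] {f : S → F} {T : ℝ} (hT : 0 < T) {s : S} {c : F}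
    (h : ∀ᵐ t : E ∂ν, f (t +ᵥ s) = c) : ballAverage ν f T s = c :=
  (average_congr (ae_restrict_of_ae h)).trans <|
    setAverage_const (measure_closedBall_pos ν 0 hT).ne' measure_closedBall_lt_top.ne c

end OpenPos

variable [MeasurableSpace S] [MeasurableVAdd₂ E S] (ν : Measure E) [SFinite ν]

theorem stronglyMeasurable_ballAverage {f : S → F} (hf : StronglyMeasurable f) (T : ℝ) :
    StronglyMeasurable (ballAverage ν f T) :=
  (hf.comp_measurable (measurable_vadd (M := E))).integral_prod_left'

variable {μ : Measure S} [SFinite μ] [VAddInvariantMeasure E S μ]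

theorem ballAverage_congr_ae {f g : S → F} (hfg : f =ᵐ[μ] g) :
    ∀ᵐ s ∂μ, ∀ T, ballAverage ν f T s = ballAverage ν g T s := by
  filter_upwards [ae_ae_vadd ν hfg] with s hs T
  exact average_congr (ae_restrict_of_ae hs)

theorem aestronglyMeasurable_ballAverage {f : S → F} (hf : AEStronglyMeasurable f μ) (T : ℝ) :
    AEStronglyMeasurable (ballAverage ν f T) μ := by
  refine (stronglyMeasurable_ballAverage ν hf.stronglyMeasurable_mk T).aestronglyMeasurable.congr ?_
  filter_upwards [ballAverage_congr_ae ν hf.ae_eq_mk] with s hs using (hs T).symm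

theorem eLpNorm_ballAverage_le {f : S → F} (hf : AEStronglyMeasurable f μ) (T : ℝ) :
    eLpNorm (ballAverage ν f T) 1 μ ≤ eLpNorm f 1 μ := by
  set ρ := (ν.restrict (closedBall (0 : E) T) univ)⁻¹ • ν.restrict (closedBall (0 : E) T)
  rw [eLpNorm_one_eq_lintegral_enorm, eLpNorm_one_eq_lintegral_enorm]
  calc ∫⁻ s, ‖ballAverage ν f T s‖ₑ ∂μ
      ≤ ∫⁻ s, ∫⁻ t, ‖f (t +ᵥ s)‖ₑ ∂ρ ∂μ :=
        lintegral_mono fun s ↦ enorm_integral_le_lintegral_enorm _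
    _ = ρ univ * ∫⁻ s, ‖f s‖ₑ ∂μ := lintegral_lintegral_vadd ρ hf.enorm
    _ ≤ 1 * ∫⁻ s, ‖f s‖ₑ ∂μ := by
        gcongr
        exact ENNReal.inv_mul_le_one _
    _ = ∫⁻ s, ‖f s‖ₑ ∂μ := one_mul _

theorem integrable_ballAverage {f : S → F} (hf : Integrable f μ) (T : ℝ) :
    Integrable (ballAverage ν f T) μ :=
  memLp_one_iff_integrable.1 ⟨aestronglyMeasurable_ballAverage ν hf.1 T,
    (eLpNorm_ballAverage_le ν hf.1 T).trans_lt (memLp_one_iff_integrable.2 hf).eLpNorm_lt_top⟩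

variable [ProperSpace E] [IsFiniteMeasureOnCompacts ν]

theorem ballAverage_add_ae {f g : S → F} (hf : Integrable f μ) (hg : Integrable g μ) :
    ∀ᵐ s ∂μ, ∀ T, ballAverage ν (f + g) T s = ballAverage ν f T s + ballAverage ν g T s := by
  filter_upwards [ae_integrableOn_closedBall_vadd ν hf, ae_integrableOn_closedBall_vadd ν hg]
    with s hfs hgs T
  exact integral_add (hfs T).to_average (hgs T).to_average

theorem ballAverage_sub_ae {f g : S → F} (hf : Integrable f μ) (hg : Integrable g μ) :
    ∀ᵐ s ∂μ, ∀ T, ballAverage ν (f - g) T s = ballAverage ν f T s - ballAverage ν g T s := by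
  filter_upwards [ae_integrableOn_closedBall_vadd ν hf, ae_integrableOn_closedBall_vadd ν hg]
    with s hfs hgs T
  exact integral_sub (hfs T).to_average (hgs T).to_average

theorem ballAverage_clm_comp_ae {F' : Type*} [NormedAddCommGroup F'] [NormedSpace ℝ F']
    [CompleteSpace F] [CompleteSpace F'] {f : S → F} (hf : Integrable f μ) (L : F →L[ℝ] F') :
    ∀ᵐ s ∂μ, ∀ T, ballAverage ν (L ∘ f) T s = L (ballAverage ν f T s) := by
  filter_upwards [ae_integrableOn_closedBall_vadd ν hf] with s hs T
  exact L.integral_comp_comm (hs T).to_average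

end BallAverage

section Invariance

theorem measurableSet_ae_vadd_eq {G S F : Type*} [MeasurableSpace G] [MeasurableSpace S] [VAdd G S]
    [MeasurableVAdd₂ G S] [TopologicalSpace F] [TopologicalSpace.MetrizableSpace F]
    (ρ : Measure G) [SFinite ρ] {f g : S → F} (hf : StronglyMeasurable f)
    (hg : StronglyMeasurable g) : MeasurableSet {s | ∀ᵐ t : G ∂ρ, f (t +ᵥ s) = g s} := by
  have hne : MeasurableSet {p : G × S | f (p.1 +ᵥ p.2) = g p.2}ᶜ :=
    ((hf.comp_measurable measurable_vadd).measurableSet_eq_fun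
      (hg.comp_measurable measurable_snd)).compl
  exact measurable_measure_prodMk_right (μ := ρ) hne (measurableSet_singleton 0)

theorem ae_ae_vadd_eq {G S F : Type*} [MeasurableSpace G] [MeasurableSpace S] [VAdd G S]
    [MeasurableVAdd₂ G S] [TopologicalSpace F] [TopologicalSpace.MetrizableSpace F]
    (ρ : Measure G) [SFinite ρ] {μ : Measure S} [SFinite μ] {f : S → F} (hf : StronglyMeasurable f)
    (hinv : ∀ u : G, (fun s ↦ f (u +ᵥ s)) =ᵐ[μ] f) :
    ∀ᵐ s ∂μ, ∀ᵐ t : G ∂ρ, f (t +ᵥ s) = f s := by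
  have heq : MeasurableSet {p : G × S | f (p.1 +ᵥ p.2) = f p.2} :=
    (hf.comp_measurable measurable_vadd).measurableSet_eq_fun (hf.comp_measurable measurable_snd)
  exact (Measure.ae_ae_comm heq).1 (ae_of_all _ hinv)

theorem ae_vadd_vadd_eq {E S F : Type*} [AddGroup E] [MeasurableSpace E] [MeasurableAdd E]
    [AddAction E S] (ν : Measure E) [ν.IsAddRightInvariant] {f : S → F} {s : S} {c : F}
    (hs : ∀ᵐ t : E ∂ν, f (t +ᵥ s) = c) (u : E) : ∀ᵐ t : E ∂ν, f (t +ᵥ u +ᵥ s) = c := by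
  simpa only [add_vadd] using (measurePreserving_add_right ν u).quasiMeasurePreserving.ae hs

variable {E S F : Type*} [NormedAddCommGroup E] [MeasurableSpace E] [AddAction E S]
  [NormedAddCommGroup F] [NormedSpace ℝ F] (ν : Measure E)

/-- The unit-ball averages of `f`, kept only on the orbits along which `f` is almost everywhere
constant. This is a strictly invariant function, equal to `f` almost everywhere when `f` is almost
everywhere invariant under each translation. -/
noncomputable def orbitwiseValue (f : S → F) : S → F :=
  {s | ∀ᵐ t : E ∂ν, f (t +ᵥ s) = ballAverage ν f 1 s}.indicator (ballAverage ν f 1)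

theorem orbitwiseValue_of_forall_not_ae_eq {f : S → F} {s : S}
    (hs : ∀ c, ¬ ∀ᵐ t : E ∂ν, f (t +ᵥ s) = c) : orbitwiseValue ν f s = 0 := by
  rw [orbitwiseValue, indicator_of_notMem (by exact hs _)]

variable [ProperSpace E] [CompleteSpace F]

theorem orbitwiseValue_of_ae_eq [ν.IsOpenPosMeasure] [IsFiniteMeasureOnCompacts ν] {f : S → F}
    {s : S} {c : F} (hs : ∀ᵐ t : E ∂ν, f (t +ᵥ s) = c) : orbitwiseValue ν f s = c := by
  have havg : ballAverage ν f 1 s = c := ballAverage_eq_of_ae_eq ν one_pos hs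
  exact (indicator_of_mem (by simpa only [mem_ofPred_eq, havg] using hs) _).trans havg

variable [BorelSpace E] [ν.IsAddHaarMeasure]

theorem orbitwiseValue_vadd (f : S → F) (u : E) (s : S) :
    orbitwiseValue ν f (u +ᵥ s) = orbitwiseValue ν f s := by
  by_cases h : ∃ c, ∀ᵐ t : E ∂ν, f (t +ᵥ s) = c
  · obtain ⟨c, hc⟩ := h
    rw [orbitwiseValue_of_ae_eq ν hc, orbitwiseValue_of_ae_eq ν (ae_vadd_vadd_eq ν hc u)]
  · rw [not_exists] at h
    rw [orbitwiseValue_of_forall_not_ae_eq ν h, orbitwiseValue_of_forall_not_ae_eq ν fun c hc ↦ ?_]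
    exact h c (by simpa only [neg_vadd_vadd] using ae_vadd_vadd_eq ν hc (-u))

variable [MeasurableSpace S] [MeasurableVAdd₂ E S]

theorem stronglyMeasurable_orbitwiseValue {f : S → F} (hf : StronglyMeasurable f) :
    StronglyMeasurable[vaddInvariants E S] (orbitwiseValue ν f) :=
  have havg : StronglyMeasurable (ballAverage ν f 1) := stronglyMeasurable_ballAverage ν hf 1
  stronglyMeasurable_vaddInvariants (havg.indicator (measurableSet_ae_vadd_eq ν hf havg))
    (orbitwiseValue_vadd ν f)

theorem aestronglyMeasurable_vaddInvariants {μ : Measure S} [SFinite μ]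
    [VAddInvariantMeasure E S μ] {f : S → F} (hf : AEStronglyMeasurable f μ)
    (hinv : ∀ u : E, (fun s ↦ f (u +ᵥ s)) =ᵐ[μ] f) :
    AEStronglyMeasurable[vaddInvariants E S] f μ := by
  have hmk_inv (u : E) : (fun s ↦ hf.mk f (u +ᵥ s)) =ᵐ[μ] hf.mk f :=
    ((measurePreserving_vadd u μ).quasiMeasurePreserving.ae_eq_comp hf.ae_eq_mk.symm).trans
      ((hinv u).trans hf.ae_eq_mk)
  let ν : Measure E := Measure.addHaar
  refine ⟨orbitwiseValue ν (hf.mk f),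
    stronglyMeasurable_orbitwiseValue ν hf.stronglyMeasurable_mk, ?_⟩
  filter_upwards [hf.ae_eq_mk, ae_ae_vadd_eq ν hf.stronglyMeasurable_mk hmk_inv] with s hfs hs
  rw [hfs, orbitwiseValue_of_ae_eq ν hs]

end Invariance

section Pointwise

variable {E S F : Type*} [NormedAddCommGroup E] [MeasurableSpace E] [AddAction E S]
  [MeasurableSpace S] [NormedAddCommGroup F] [NormedSpace ℝ F] [CompleteSpace F]
  {ν : Measure E} {μ : Measure S}

variable (ν μ) in
/-- The conclusion of the pointwise ergodic theorem for `f`: its averages along balls converge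
almost everywhere to its conditional expectation on the invariant σ-algebra. -/
def ConvergesToCondExp (f : S → F) : Prop :=
  ∀ᵐ s ∂μ, Tendsto (ballAverage ν f · s) atTop (𝓝 ((μ[f | vaddInvariants E S]) s))

namespace ConvergesToCondExp

variable [MeasurableVAdd₂ E S] [VAddInvariantMeasure E S μ]

theorem congr_ae [SFinite ν] [SFinite μ] {f g : S → F} (hf : ConvergesToCondExp ν μ f)
    (hfg : f =ᵐ[μ] g) : ConvergesToCondExp ν μ g := by
  filter_upwards [hf, ballAverage_congr_ae ν hfg,
    condExp_congr_ae (m := vaddInvariants E S) hfg] with s hs havg hcond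
  simpa only [havg, hcond] using hs

variable [IsFiniteMeasure μ]

theorem add [ProperSpace E] [SFinite ν] [IsFiniteMeasureOnCompacts ν] {f g : S → F}
    (hf_int : Integrable f μ) (hg_int : Integrable g μ) (hf : ConvergesToCondExp ν μ f)
    (hg : ConvergesToCondExp ν μ g) : ConvergesToCondExp ν μ (f + g) := by
  filter_upwards [hf, hg, ballAverage_add_ae ν hf_int hg_int,
    condExp_add hf_int hg_int (vaddInvariants E S)] with s hfs hgs havg hcond
  simpa only [havg, hcond, Pi.add_apply] using hfs.add hgs

theorem clm_comp [ProperSpace E] [SFinite ν] [IsFiniteMeasureOnCompacts ν] {F' : Type*}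
    [NormedAddCommGroup F'] [NormedSpace ℝ F'] [CompleteSpace F'] {f : S → F}
    (hf_int : Integrable f μ) (hf : ConvergesToCondExp ν μ f) (L : F →L[ℝ] F') :
    ConvergesToCondExp ν μ (L ∘ f) := by
  filter_upwards [hf, ballAverage_clm_comp_ae ν hf_int L,
    L.comp_condExp_comm (m := vaddInvariants E S) hf_int] with s hs havg hcond
  rw [← hcond]
  exact ((L.continuous.tendsto _).comp hs).congr fun T ↦ (havg T).symm

theorem limsup_enorm_sub_le [ProperSpace E] [SFinite ν] [IsFiniteMeasureOnCompacts ν] {f g : S → F}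
    (hf : Integrable f μ) (hg_int : Integrable g μ) (hg : ConvergesToCondExp ν μ g) :
    ∀ᵐ s ∂μ, limsup (fun T ↦ ‖ballAverage ν f T s - (μ[f | vaddInvariants E S]) s‖ₑ) atTop ≤
      ballMaximal ν (Ioi 0) (‖(f - g) ·‖ₑ) s + ‖(μ[f - g | vaddInvariants E S]) s‖ₑ := by
  filter_upwards [hg, ballAverage_sub_ae ν hf hg_int,
    condExp_sub hf hg_int (vaddInvariants E S)] with s hgs havg hcond
  set M := ballMaximal ν (Ioi 0) (‖(f - g) ·‖ₑ) s + ‖(μ[f - g | vaddInvariants E S]) s‖ₑ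
  have hlim : Tendsto (fun T ↦ M + ‖ballAverage ν g T s - (μ[g | vaddInvariants E S]) s‖ₑ)
      atTop (𝓝 M) := by
    simpa using (hgs.sub_const ((μ[g | vaddInvariants E S]) s)).enorm.const_add M
  refine (limsup_le_limsup ?_).trans hlim.limsup_eq.le
  filter_upwards [eventually_gt_atTop 0] with T hT
  have hsplit : ballAverage ν f T s - (μ[f | vaddInvariants E S]) s =
      ballAverage ν (f - g) T s - (μ[f - g | vaddInvariants E S]) s +
        (ballAverage ν g T s - (μ[g | vaddInvariants E S]) s) := by
    rw [havg, hcond, Pi.sub_apply]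
    abel
  rw [hsplit]
  exact (enorm_add_le _ _).trans <| add_le_add_left (enorm_sub_le.trans <|
    add_le_add_left (enorm_ballAverage_le_ballMaximal ν _ hT s) _) _

theorem of_invariant [ProperSpace E] [BorelSpace E] [ν.IsAddHaarMeasure] {f : S → F}
    (hf : Integrable f μ) (hinv : ∀ u : E, (fun s ↦ f (u +ᵥ s)) =ᵐ[μ] f) :
    ConvergesToCondExp ν μ f := by
  obtain ⟨g, hg, hfg⟩ := aestronglyMeasurable_vaddInvariants hf.1 hinv
  refine congr_ae (ae_of_all _ fun s ↦ ?_) hfg.symm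
  rw [condExp_of_stronglyMeasurable vaddInvariants_le hg (hf.congr hfg)]
  refine tendsto_const_nhds.congr' ?_
  filter_upwards [eventually_gt_atTop 0] with T hT
  exact (ballAverage_eq_of_ae_eq ν hT <|
    ae_of_all _ fun t ↦ vadd_eq_of_stronglyMeasurable_vaddInvariants hg t s).symm

variable [NormedSpace ℝ E] [FiniteDimensional ℝ E] [BorelSpace E] [ν.IsAddHaarMeasure]

theorem of_coboundary {g : S → F} (hg : StronglyMeasurable g) {C : ℝ} (hC : ∀ s, ‖g s‖ ≤ C)
    (u : E) : ConvergesToCondExp ν μ ((fun s ↦ g (u +ᵥ s)) - g) := by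
  have hg_int : Integrable g μ := .of_bound hg.aestronglyMeasurable C (ae_of_all _ hC)
  have hgu_int : Integrable (fun s ↦ g (u +ᵥ s)) μ :=
    (measurePreserving_vadd u μ).integrable_comp_of_integrable hg_int
  filter_upwards [ballAverage_sub_ae ν hgu_int hg_int,
    condExp_sub hgu_int hg_int (vaddInvariants E S),
    condExp_vaddInvariants_comp_vadd hg_int u] with s havg hcond_sub hcond
  have htranslate (T : ℝ) : ballAverage ν (fun x ↦ g (u +ᵥ x)) T s =
      ⨍ t in closedBall u T, g (t +ᵥ s) ∂ν := by
    rw [← ballAverage_vadd]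
    simp only [ballAverage, vadd_vadd, add_comm u]
  rw [hcond_sub, Pi.sub_apply, hcond, sub_self]
  simp only [havg, htranslate]
  exact tendsto_setAverage_closedBall_sub_setAverage_closedBall ν
    (hg.comp_measurable (measurable_vadd_const s)).aestronglyMeasurable (fun t ↦ hC _) u

theorem mul_measure_lt_limsup_enorm_sub_le {f g : S → F} (hf : Integrable f μ)
    (hg_int : Integrable g μ) (hg : ConvergesToCondExp ν μ g) (c : ℝ≥0∞) :
    c * μ {s | c + c <
        limsup (fun T ↦ ‖ballAverage ν f T s - (μ[f | vaddInvariants E S]) s‖ₑ) atTop} ≤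
      (10 ^ finrank ℝ E + 1) * eLpNorm (f - g) 1 μ := by
  set M := ballMaximal ν (Ioi 0) (‖(f - g) ·‖ₑ)
  set h := μ[f - g | vaddInvariants E S]
  have hmaximal : c * μ {s | c < M s} ≤ 10 ^ finrank ℝ E * eLpNorm (f - g) 1 μ := by
    rw [eLpNorm_one_eq_lintegral_enorm]
    exact mul_measure_lt_ballMaximal_le (hf.sub hg_int).1.enorm c
  have hcondExp : c * μ {s | c ≤ ‖h s‖ₑ} ≤ eLpNorm (f - g) 1 μ := by
    refine le_trans ?_ (eLpNorm_condExp_le_eLpNorm (m := vaddInvariants E S) _ le_rfl)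
    rw [eLpNorm_one_eq_lintegral_enorm]
    exact mul_meas_ge_le_lintegral₀ integrable_condExp.1.enorm c
  have hsubset : {s | c + c <
        limsup (fun T ↦ ‖ballAverage ν f T s - (μ[f | vaddInvariants E S]) s‖ₑ) atTop} ≤ᵐ[μ]
      ({s | c < M s} ∪ {s | c ≤ ‖h s‖ₑ} : Set S) := by
    filter_upwards [limsup_enorm_sub_le hf hg_int hg] with s hle (hlt : c + c < _)
    exact (lt_or_lt_of_add_lt_add (hlt.trans_le hle)).imp_right le_of_lt
  calc c * μ _ ≤ c * (μ {s | c < M s} + μ {s | c ≤ ‖h s‖ₑ}) := by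
        gcongr
        exact (measure_mono_ae hsubset).trans (measure_union_le _ _)
    _ ≤ (10 ^ finrank ℝ E + 1) * eLpNorm (f - g) 1 μ := by
        rw [mul_add, add_mul, one_mul]
        exact add_le_add hmaximal hcondExp

theorem of_tendsto_eLpNorm {ι : Type*} {l : Filter ι} [l.NeBot] {f : S → F} {g : ι → S → F}
    (hf : Integrable f μ) (hg_int : ∀ i, Integrable (g i) μ)
    (hg : ∀ i, ConvergesToCondExp ν μ (g i))
    (hlim : Tendsto (fun i ↦ eLpNorm (f - g i) 1 μ) l (𝓝 0)) : ConvergesToCondExp ν μ f := by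
  set u := fun s ↦ limsup (fun T ↦ ‖ballAverage ν f T s - (μ[f | vaddInvariants E S]) s‖ₑ) atTop
  have hle (c : ℝ≥0∞) (hc : c ≠ 0) : ∀ᵐ s ∂μ, u s ≤ c + c := by
    have hbound : Tendsto (fun i ↦ (10 ^ finrank ℝ E + 1) * eLpNorm (f - g i) 1 μ) l (𝓝 0) := by
      simpa using ENNReal.Tendsto.const_mul hlim (.inr (by finiteness))
    have hzero : c * μ {s | c + c < u s} = 0 := le_zero_iff.1 <|
      ge_of_tendsto' hbound fun i ↦ mul_measure_lt_limsup_enorm_sub_le hf (hg_int i) (hg i) c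
    simpa only [ae_iff, not_le] using (mul_eq_zero.1 hzero).resolve_left hc
  obtain ⟨c, -, hc_pos, hc_lim⟩ := exists_seq_strictAnti_tendsto' (zero_lt_one' ℝ≥0∞)
  filter_upwards [ae_all_iff.2 fun n ↦ hle (c n) (hc_pos n).1.ne'] with s hs
  have hu : u s ≤ 0 := ge_of_tendsto' (by simpa using hc_lim.add hc_lim) hs
  exact tendsto_iff_edist_tendsto_0.2 <| by
    simpa only [edist_eq_enorm_sub] using tendsto_of_le_liminf_of_limsup_le zero_le hu

end ConvergesToCondExp

end Pointwise

section MeanSquare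

variable {E S F : Type*} [NormedAddCommGroup E] [NormedSpace ℝ E] [FiniteDimensional ℝ E]
  [MeasurableSpace E] [BorelSpace E] (ν : Measure E) [ν.IsAddHaarMeasure] [MeasurableSpace S]
  [AddAction E S] [MeasurableVAdd₂ E S] (μ : Measure S) [IsFiniteMeasure μ]
  [VAddInvariantMeasure E S μ]

theorem isClosed_convergesToCondExp [NormedAddCommGroup F] [NormedSpace ℝ F] [CompleteSpace F]
    (p : ℝ≥0∞) [Fact (1 ≤ p)] : IsClosed {x : Lp F p μ | ConvergesToCondExp ν μ x} := by
  refine IsSeqClosed.isClosed fun x y hx hxy ↦ ?_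
  have hint (z : Lp F p μ) : Integrable z μ := (Lp.memLp z).integrable Fact.out
  refine .of_tendsto_eLpNorm (l := atTop) (hint y) (fun n ↦ hint (x n)) hx ?_
  set a := μ univ ^ (1 / (1 : ℝ≥0∞).toReal - 1 / p.toReal)
  have hexp : p.toReal⁻¹ ≤ 1 := by
    rw [← ENNReal.toReal_inv]
    exact ENNReal.toReal_mono ENNReal.one_ne_top (ENNReal.inv_le_one.2 Fact.out)
  have ha : a ≠ ∞ := ENNReal.rpow_ne_top_of_nonneg (by simpa using hexp) (measure_ne_top μ _)
  have hlim : Tendsto (fun n ↦ eLpNorm (⇑y - ⇑(x n)) p μ * a) atTop (𝓝 0) := by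
    simpa [eLpNorm_sub_comm] using
      ENNReal.Tendsto.mul_const ((Lp.tendsto_Lp_iff_tendsto_eLpNorm' x y).1 hxy) (.inr ha)
  exact tendsto_of_tendsto_of_tendsto_of_le_of_le tendsto_const_nhds hlim (fun _ ↦ zero_le)
    fun n ↦ eLpNorm_le_eLpNorm_mul_rpow_measure_univ Fact.out
      ((Lp.aestronglyMeasurable y).sub (Lp.aestronglyMeasurable (x n)))

/-- The square-integrable real functions that satisfy the pointwise ergodic theorem, as a subspace
of the Hilbert space `L²(μ)`. -/
noncomputable def convergesToCondExpSubmodule : Submodule ℝ (Lp ℝ 2 μ) where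
  carrier := {x | ConvergesToCondExp ν μ x}
  add_mem' {x y} hx hy :=
    (hx.add ((Lp.memLp x).integrable one_le_two) ((Lp.memLp y).integrable one_le_two) hy).congr_ae
      (Lp.coeFn_add x y).symm
  zero_mem' := (ConvergesToCondExp.of_invariant (integrable_zero S ℝ μ) fun _ ↦ .rfl).congr_ae
    (Lp.coeFn_zero ℝ 2 μ).symm
  smul_mem' c x hx :=
    (hx.clm_comp ((Lp.memLp x).integrable one_le_two) (c • ContinuousLinearMap.id ℝ ℝ)).congr_ae
      (Lp.coeFn_smul c x).symm

theorem setIntegral_preimage_vadd_eq_of_mem_orthogonal {x : Lp ℝ 2 μ}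
    (hx : x ∈ (convergesToCondExpSubmodule ν μ)ᗮ) {A : Set S} (hA : MeasurableSet A) (u : E) :
    ∫ s in (u +ᵥ ·) ⁻¹' A, x s ∂μ = ∫ s in A, x s ∂μ := by
  have hu : MeasurableSet ((u +ᵥ ·) ⁻¹' A) := measurable_const_vadd u hA
  have hcoboundary : indicatorConstLp 2 hu (measure_ne_top μ _) (1 : ℝ) -
      indicatorConstLp 2 hA (measure_ne_top μ _) 1 ∈ convergesToCondExpSubmodule ν μ := by
    refine (ConvergesToCondExp.of_coboundary (stronglyMeasurable_one.indicator hA) (C := 1)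
      (fun s ↦ ?_) u).congr_ae ?_
    · exact (norm_indicator_le_norm_self 1 s).trans norm_one.le
    · exact ((indicatorConstLp_coeFn.sub indicatorConstLp_coeFn).symm.trans
        (Lp.coeFn_sub _ _).symm)
  rw [← sub_eq_zero, ← L2.inner_indicatorConstLp_one hu (measure_ne_top μ _),
    ← L2.inner_indicatorConstLp_one hA (measure_ne_top μ _), ← inner_sub_left]
  exact hx _ hcoboundary

theorem comp_vadd_ae_eq_of_mem_orthogonal {x : Lp ℝ 2 μ}
    (hx : x ∈ (convergesToCondExpSubmodule ν μ)ᗮ) (u : E) : (fun s ↦ x (u +ᵥ s)) =ᵐ[μ] x := by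
  have hx_int : Integrable x μ := (Lp.memLp x).integrable one_le_two
  have hu : MeasurePreserving (u +ᵥ · : S → S) μ μ := measurePreserving_vadd u μ
  refine Integrable.ae_eq_of_forall_setIntegral_eq _ _ (hu.integrable_comp_of_integrable hx_int)
    hx_int fun A hA _ ↦ ?_
  calc ∫ s in A, x (u +ᵥ s) ∂μ
      = ∫ s in (u +ᵥ ·) ⁻¹' ((-u +ᵥ ·) ⁻¹' A), x (u +ᵥ s) ∂μ := by
        simp only [← preimage_comp, Function.comp_def, neg_vadd_vadd, preimage_id']
    _ = ∫ s in (-u +ᵥ ·) ⁻¹' A, x s ∂μ :=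
        hu.setIntegral_preimage_emb (measurableEmbedding_const_vadd u) _ _
    _ = ∫ s in A, x s ∂μ := setIntegral_preimage_vadd_eq_of_mem_orthogonal ν μ hx hA (-u)

theorem convergesToCondExpSubmodule_eq_top : convergesToCondExpSubmodule ν μ = ⊤ := by
  have : CompleteSpace (convergesToCondExpSubmodule ν μ) :=
    (isClosed_convergesToCondExp ν μ 2).completeSpace_coe
  rw [← Submodule.orthogonal_eq_bot_iff, Submodule.eq_bot_iff]
  intro x hx
  have hx_mem : x ∈ convergesToCondExpSubmodule ν μ := .of_invariant
    ((Lp.memLp x).integrable one_le_two) (comp_vadd_ae_eq_of_mem_orthogonal ν μ hx)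
  exact inner_self_eq_zero.1 (hx x hx_mem)

end MeanSquare

section ErgodicTheorem

variable {E S F : Type*} [NormedAddCommGroup E] [MeasurableSpace E] (ν : Measure E)
  [MeasurableSpace S] [AddAction E S] [MeasurableVAdd₂ E S] {μ : Measure S} [IsFiniteMeasure μ]
  [VAddInvariantMeasure E S μ] [NormedAddCommGroup F] [NormedSpace ℝ F] [CompleteSpace F]

theorem eLpNorm_ballAverage_sub_condExp_le [ProperSpace E] [SFinite ν] [IsFiniteMeasureOnCompacts ν]
    {f g : S → F} (hf : Integrable f μ) (hg : Integrable g μ) (T : ℝ) :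
    eLpNorm (ballAverage ν f T - μ[f | vaddInvariants E S]) 1 μ ≤
      2 * eLpNorm (f - g) 1 μ + eLpNorm (ballAverage ν g T - μ[g | vaddInvariants E S]) 1 μ := by
  have hsplit : ballAverage ν f T - μ[f | vaddInvariants E S] =ᵐ[μ]
      ballAverage ν (f - g) T - μ[f - g | vaddInvariants E S] +
        (ballAverage ν g T - μ[g | vaddInvariants E S]) := by
    filter_upwards [ballAverage_sub_ae ν hf hg, condExp_sub hf hg (vaddInvariants E S)]
      with s havg hcond
    simp only [Pi.add_apply, Pi.sub_apply, havg, hcond]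
    abel
  have havg := integrable_ballAverage ν (hf.sub hg) T
  have hcond := eLpNorm_condExp_le_eLpNorm (μ := μ) (m := vaddInvariants E S) (f - g) le_rfl
  rw [eLpNorm_congr_ae hsplit, two_mul]
  refine (eLpNorm_add_le (havg.1.sub integrable_condExp.1)
    ((integrable_ballAverage ν hg T).1.sub integrable_condExp.1) le_rfl).trans ?_
  gcongr
  exact (eLpNorm_sub_le havg.1 integrable_condExp.1 le_rfl).trans
    (add_le_add (eLpNorm_ballAverage_le ν (hf.sub hg).1 T) hcond)

variable [NormedSpace ℝ E] [FiniteDimensional ℝ E] [BorelSpace E] [ν.IsAddHaarMeasure]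

theorem convergesToCondExp_of_memLp_two {f : S → ℝ} (hf : MemLp f 2 μ) :
    ConvergesToCondExp ν μ f := by
  have hmem : hf.toLp f ∈ convergesToCondExpSubmodule ν μ := by
    rw [convergesToCondExpSubmodule_eq_top]
    exact Submodule.mem_top
  exact ConvergesToCondExp.congr_ae hmem hf.coeFn_toLp

theorem convergesToCondExp_of_integrable {f : S → F} (hf : Integrable f μ) :
    ConvergesToCondExp ν μ f := by
  refine Integrable.induction (ConvergesToCondExp ν μ) (fun c A hA _ ↦ ?_)
    (fun _ _ _ hf hg hf_conv hg_conv ↦ hf_conv.add hf hg hg_conv)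
    (isClosed_convergesToCondExp ν μ 1) (fun _ _ hfg _ hf_conv ↦ hf_conv.congr_ae hfg) hf
  have hA_memLp : MemLp (A.indicator fun _ ↦ (1 : ℝ)) 2 μ :=
    memLp_indicator_const 2 hA 1 (.inr (measure_ne_top μ A))
  convert (convergesToCondExp_of_memLp_two ν hA_memLp).clm_comp (hA_memLp.integrable one_le_two)
    (.toSpanSingleton ℝ c)
  ext s
  by_cases hs : s ∈ A <;> simp [hs]

theorem tendsto_eLpNorm_ballAverage_sub_condExp_of_bounded {f : S → F}
    (hf : AEStronglyMeasurable f μ) {C : ℝ} (hC : ∀ s, ‖f s‖ ≤ C) :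
    Tendsto (fun T ↦ eLpNorm (ballAverage ν f T - μ[f | vaddInvariants E S]) 1 μ)
      atTop (𝓝 0) := by
  have hf_int : Integrable f μ := .of_bound hf C (ae_of_all _ hC)
  simp only [eLpNorm_one_eq_lintegral_enorm, Pi.sub_apply]
  rw [← lintegral_zero (μ := μ)]
  refine tendsto_lintegral_filter_of_dominated_convergence'
    (fun s ↦ ENNReal.ofReal C + ‖(μ[f | vaddInvariants E S]) s‖ₑ) ?_ ?_ ?_ ?_
  · exact .of_forall fun T ↦
      ((aestronglyMeasurable_ballAverage ν hf T).sub integrable_condExp.1).enorm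
  · filter_upwards [eventually_gt_atTop 0] with T hT
    refine ae_of_all _ fun s ↦ enorm_sub_le.trans ?_
    gcongr
    rw [← ofReal_norm]
    exact ENNReal.ofReal_le_ofReal (norm_ballAverage_le ν hT hC s)
  · rw [lintegral_add_left measurable_const, lintegral_const]
    exact ENNReal.add_ne_top.2 ⟨by finiteness, integrable_condExp.2.ne⟩
  · filter_upwards [convergesToCondExp_of_integrable ν hf_int] with s hs
    simpa using (hs.sub_const ((μ[f | vaddInvariants E S]) s)).enorm

theorem tendsto_eLpNorm_ballAverage_sub_condExp {f : S → F} (hf : Integrable f μ) :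
    Tendsto (fun T ↦ eLpNorm (ballAverage ν f T - μ[f | vaddInvariants E S]) 1 μ)
      atTop (𝓝 0) := by
  refine ENNReal.tendsto_nhds_zero.2 fun ε hε ↦ ?_
  obtain ⟨g, hfg, hg⟩ := (memLp_one_iff_integrable.2 hf).exists_simpleFunc_eLpNorm_sub_lt
    ENNReal.one_ne_top (ε := ε / 2 / 2) (by simpa using hε.ne')
  obtain ⟨C, hC⟩ := g.exists_forall_norm_le
  have hg_lim := tendsto_eLpNorm_ballAverage_sub_condExp_of_bounded (μ := μ) ν
    g.aestronglyMeasurable hC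
  filter_upwards [ENNReal.tendsto_nhds_zero.1 hg_lim (ε / 2) (ENNReal.half_pos hε.ne')] with T hT
  calc eLpNorm (ballAverage ν f T - μ[f | vaddInvariants E S]) 1 μ
      ≤ 2 * eLpNorm (f - ⇑g) 1 μ +
          eLpNorm (ballAverage ν g T - μ[⇑g | vaddInvariants E S]) 1 μ :=
        eLpNorm_ballAverage_sub_condExp_le ν hf (memLp_one_iff_integrable.1 hg) T
    _ ≤ 2 * (ε / 2 / 2) + ε / 2 := by gcongr
    _ = ε := by
        rw [ENNReal.mul_div_cancel two_ne_zero ENNReal.ofNat_ne_top, ENNReal.add_halves]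

theorem stmt9_general {f : S → F} (hf : Integrable f μ) :
    (∀ᵐ s ∂μ, Tendsto (fun T ↦ ⨍ t in closedBall (0 : E) T, f (t +ᵥ s) ∂ν) atTop
      (𝓝 ((μ[f | vaddInvariants E S]) s))) ∧
    Tendsto (fun T ↦ ∫ s, ‖(⨍ t in closedBall (0 : E) T, f (t +ᵥ s) ∂ν) -
      (μ[f | vaddInvariants E S]) s‖ ∂μ) atTop (𝓝 0) := by
  refine ⟨convergesToCondExp_of_integrable ν hf, ?_⟩
  have hlim := (ENNReal.tendsto_toReal ENNReal.zero_ne_top).comp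
    (tendsto_eLpNorm_ballAverage_sub_condExp ν hf)
  refine hlim.congr fun T ↦ ?_
  rw [Function.comp_apply, eLpNorm_one_eq_lintegral_enorm]
  exact (integral_norm_eq_lintegral_enorm
    ((integrable_ballAverage ν hf T).1.sub integrable_condExp.1)).symm

end ErgodicTheorem

/-- Multiparameter Birkhoff theorem, continuous case: for a jointly measurable
measure-preserving `ℝ^d`-action `{φ_t}` on a probability space `(S,μ)` and `f₀ ∈ L¹(μ)`, the
averages `A_T f = (2T)^{-d} ∫_{(−T,T]^d} f₀(φ_t(·)) dt` converge `μ`-a.e. and in `L¹` to the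
conditional expectation of `f₀` given the σ-algebra `𝓘` of invariant measurable sets. -/
theorem stmt9 {S : Type*} [MeasurableSpace S]
    (μ : Measure S) [IsProbabilityMeasure μ] (d : ℕ)
    (φ : (Fin d → ℝ) → S → S)
    (hφjoint : Measurable fun p : (Fin d → ℝ) × S => φ p.1 p.2)
    (hid : ∀ s, φ 0 s = s)
    (hcomp : ∀ u v s, φ (u + v) s = φ u (φ v s))
    (hpres : ∀ t, ∀ A : Set S, MeasurableSet A → μ (φ t ⁻¹' A) = μ A) :
    ∀ f₀ : S → ℝ, Integrable f₀ μ →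
      (∀ᵐ s ∂μ, Tendsto (fun T : ℝ =>
          ((2 * T) ^ d)⁻¹ *
            ∫ t in Set.univ.pi fun _ : Fin d => Set.Ioc (-T) T, f₀ (φ t s))
        atTop
        (nhds ((μ[f₀|MeasurableSpace.generateFrom
          {A : Set S | MeasurableSet A ∧ ∀ t, φ t ⁻¹' A = A}]) s))) ∧
      Tendsto (fun T : ℝ =>
          ∫ s, |(((2 * T) ^ d)⁻¹ *
            ∫ t in Set.univ.pi fun _ : Fin d => Set.Ioc (-T) T, f₀ (φ t s)) -
            (μ[f₀|MeasurableSpace.generateFrom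
              {A : Set S | MeasurableSet A ∧ ∀ t, φ t ⁻¹' A = A}]) s| ∂μ)
        atTop (nhds 0) := by
  intro f₀ hf₀
  let _ : AddAction (Fin d → ℝ) S := { vadd := φ, zero_vadd := hid, add_vadd := hcomp }
  have : MeasurableVAdd₂ (Fin d → ℝ) S := ⟨hφjoint⟩
  have : VAddInvariantMeasure (Fin d → ℝ) S μ := ⟨fun t _ hA ↦ hpres t _ hA⟩
  have hcube : ∀ᶠ T in atTop, ∀ s, ⨍ t in closedBall (0 : Fin d → ℝ) T, f₀ (t +ᵥ s) =
      ((2 * T) ^ d)⁻¹ * ∫ t in univ.pi fun _ : Fin d ↦ Ioc (-T) T, f₀ (φ t s) := by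
    filter_upwards [eventually_ge_atTop 0] with T hT s
    rw [← inv_pow_mul_setIntegral_pi_Ioc_eq_setAverage hT, Fintype.card_fin]
    rfl
  obtain ⟨hae, hL1⟩ := stmt9_general (volume : Measure (Fin d → ℝ)) hf₀
  rw [← generateFrom_eq_vaddInvariants] at hae hL1
  refine ⟨hae.mono fun s hs ↦ hs.congr' (hcube.mono fun T hT ↦ hT s), hL1.congr' ?_⟩
  filter_upwards [hcube] with T hT
  simp only [hT, Real.norm_eq_abs]
  rfl
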